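/- Every v-transform 𝒱 preserves the uniform distribution: if U is a random variable uniformly distributed on [0,1], then 𝒱(U) is uniformly distributed on [0,1]. Equivalently, 𝒱 is a Lebesgue-measure-preserving transformation of [0,1]: for every Borel set B ⊆ [0,1], the Lebesgue measure of 𝒱⁻¹(B) equals the Lebesgue measure of B. -/

import Mathlib

open Set MeasureTheory ProbabilityTheory

/-- A v-transform with fulcrum `δ`: a mapping of `[0,1]` to `[0,1]` with
`𝒱 0 = 𝒱 1 = 1`, `𝒱 δ = 0`, continuous, strictly decreasing on `[0,δ]`,
strictly increasing on `[δ,1]`, and satisfying the square property. -/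
structure IsVTransform (V : ℝ → ℝ) (δ : ℝ) : Prop where
  mapsTo : ∀ u ∈ Set.Icc (0:ℝ) 1, V u ∈ Set.Icc (0:ℝ) 1
  fulcrum_mem : δ ∈ Set.Ioo (0:ℝ) 1
  map_zero : V 0 = 1
  map_one : V 1 = 1
  map_fulcrum : V δ = 0
  contOn : ContinuousOn V (Set.Icc 0 1)
  strictAntiOn : StrictAntiOn V (Set.Icc 0 δ)
  strictMonoOn : StrictMonoOn V (Set.Icc δ 1)
  square : ∀ u ∈ Set.Icc (0:ℝ) 1, u ≠ δ →
    ∃ us ∈ Set.Icc (0:ℝ) 1, ((u < δ ∧ δ < us) ∨ (us < δ ∧ δ < u)) ∧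
      V us = V u ∧ |us - u| = V u

/-- The partial inverse `𝒱⁻¹(v) = inf {u ∈ [0,1] : 𝒱(u) = v}` of a v-transform,
taking values in `[0,δ]` (the decreasing branch). -/
noncomputable def partialInverse (V : ℝ → ℝ) (v : ℝ) : ℝ :=
  sInf {u | u ∈ Set.Icc (0:ℝ) 1 ∧ V u = v}

/-- The conditional down probability `Δ(v) = -1 / 𝒱′(𝒱⁻¹(v))`, where the derivative
is taken within `[0,δ]` (so that at the fulcrum it is the left derivative, following
the convention of the paper). -/
noncomputable def downProb (V : ℝ → ℝ) (δ : ℝ) (v : ℝ) : ℝ :=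
  -1 / derivWithin V (Set.Icc 0 δ) (partialInverse V v)

/-- The stochastic inversion function `𝒱⁻¹(v,w)` of a v-transform. -/
noncomputable def stochInv (V : ℝ → ℝ) (δ : ℝ) (v w : ℝ) : ℝ :=
  if w ≤ downProb V δ v then partialInverse V v else v + partialInverse V v

/-!
On the decreasing branch the square property says that the dual point of `a` is `a + V a`. As `V`
falls on `[0, δ]` and rises on `[δ, 1]`, its sublevel set at height `V a` is the interval
`[a, a + V a]`, whose length is exactly `V a`. Every height in `[0, 1]` is attained on the
decreasing branch, so the image measure has the distribution function of the uniform law.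
-/

theorem preimage_Iic_inter_Icc_of_strictAntiOn_of_strictMonoOn {α β : Type*} [LinearOrder α]
    [Preorder β] {f : α → β} {p q m a b : α} (hanti : StrictAntiOn f (Icc p m))
    (hmono : StrictMonoOn f (Icc m q)) (ha : a ∈ Icc p m) (hb : b ∈ Icc m q) (hab : f b = f a) :
    f ⁻¹' Iic (f a) ∩ Icc p q = Icc a b := by
  have left_branch {u : α} (hu : u ∈ Icc p m) : f u ≤ f a ↔ a ≤ u := hanti.le_iff_ge hu ha
  have right_branch {u : α} (hu : u ∈ Icc m q) : f u ≤ f a ↔ u ≤ b :=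
    hab ▸ hmono.le_iff_le hu hb
  ext u
  constructor
  · rintro ⟨hfu, hpu, huq⟩
    rcases le_total u m with hum | hmu
    · exact ⟨(left_branch ⟨hpu, hum⟩).1 hfu, hum.trans hb.1⟩
    · exact ⟨ha.2.trans hmu, (right_branch ⟨hmu, huq⟩).1 hfu⟩
  · rintro ⟨hau, hub⟩
    have hpu : p ≤ u := ha.1.trans hau
    have huq : u ≤ q := hub.trans hb.2
    refine ⟨?_, hpu, huq⟩
    rcases le_total u m with hum | hmu
    · exact (left_branch ⟨hpu, hum⟩).2 hau
    · exact (right_branch ⟨hmu, huq⟩).2 hub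

theorem eq_restrict_Icc_of_measure_Iic {α : Type*} [TopologicalSpace α] [MeasurableSpace α]
    [SecondCountableTopology α] [LinearOrder α] [OrderTopology α] [BorelSpace α]
    {μ ν : Measure α} [NullSingletonClass μ] [IsFiniteMeasure ν] {a b : α} (hab : a ≤ b)
    (huniv : ν univ = μ (Icc a b)) (hIic : ∀ x ∈ Icc a b, ν (Iic x) = μ (Icc a x)) :
    ν = μ.restrict (Icc a b) := by
  refine Measure.ext_of_Iic _ _ fun x => ?_
  rw [Measure.restrict_apply measurableSet_Iic, ← Ici_inter_Iic, inter_left_comm, Iic_inter_Iic,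
    Ici_inter_Iic]
  rcases lt_or_ge x a with hxa | hax
  · have hνa : ν (Iic a) = 0 := by
      rw [hIic a (left_mem_Icc.2 hab), Icc_self, measure_singleton]
    rw [measure_mono_null (Iic_subset_Iic.2 hxa.le) hνa,
      Icc_eq_empty_of_lt (min_lt_of_left_lt hxa), measure_empty]
  rcases le_total x b with hxb | hbx
  · rw [min_eq_left hxb, hIic x ⟨hax, hxb⟩]
  · rw [min_eq_right hbx]
    apply le_antisymm
    · exact huniv ▸ measure_mono (subset_univ _)
    · rw [← hIic b (right_mem_Icc.2 hab)]
      exact measure_mono (Iic_subset_Iic.2 hbx)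

namespace IsVTransform

variable {V : ℝ → ℝ} {δ : ℝ}

theorem surjOn_Icc_zero_fulcrum (hV : IsVTransform V δ) : SurjOn V (Icc 0 δ) (Icc 0 1) := by
  obtain ⟨hδ0, hδ1⟩ := hV.fulcrum_mem
  have hcont : ContinuousOn V (Icc 0 δ) := hV.contOn.mono (Icc_subset_Icc_right hδ1.le)
  simpa only [SurjOn, hV.map_zero, hV.map_fulcrum] using intermediate_value_Icc' hδ0.le hcont

theorem add_map_self_mem_and_map_eq (hV : IsVTransform V δ) {a : ℝ} (ha : a ∈ Icc 0 δ) :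
    a + V a ∈ Icc δ 1 ∧ V (a + V a) = V a := by
  have hδ1 : δ ≤ 1 := hV.fulcrum_mem.2.le
  rcases ha.2.eq_or_lt with rfl | haδ
  · simp only [hV.map_fulcrum, add_zero, left_mem_Icc, hδ1, and_self]
  · obtain ⟨b, hb, hsides, hVb, hdist⟩ := hV.square a ⟨ha.1, ha.2.trans hδ1⟩ haδ.ne
    have hδb : δ < b := hsides.elim And.right fun h => absurd h.2 haδ.not_gt
    have hdual : b = a + V a := by
      rw [← hdist, abs_of_pos (sub_pos.2 (haδ.trans hδb)), add_sub_cancel]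
    exact hdual ▸ ⟨⟨hδb.le, hb.2⟩, hVb⟩

theorem preimage_Iic_inter_Icc (hV : IsVTransform V δ) {a : ℝ} (ha : a ∈ Icc 0 δ) :
    V ⁻¹' Iic (V a) ∩ Icc 0 1 = Icc a (a + V a) :=
  have ⟨hmem, hmap⟩ := hV.add_map_self_mem_and_map_eq ha
  preimage_Iic_inter_Icc_of_strictAntiOn_of_strictMonoOn hV.strictAntiOn hV.strictMonoOn
    ha hmem hmap

theorem volume_preimage_Iic_inter_Icc (hV : IsVTransform V δ) {x : ℝ} (hx : x ∈ Icc 0 1) :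
    volume (V ⁻¹' Iic x ∩ Icc 0 1) = ENNReal.ofReal x := by
  obtain ⟨a, ha, rfl⟩ := hV.surjOn_Icc_zero_fulcrum hx
  rw [hV.preimage_Iic_inter_Icc ha, Real.volume_Icc, add_sub_cancel_left]

theorem aemeasurable_restrict_Icc (hV : IsVTransform V δ) :
    AEMeasurable V (volume.restrict (Icc 0 1)) :=
  hV.contOn.aemeasurable measurableSet_Icc

theorem map_volume_restrict_Icc (hV : IsVTransform V δ) :
    Measure.map V (volume.restrict (Icc 0 1)) = volume.restrict (Icc 0 1) := by
  refine eq_restrict_Icc_of_measure_Iic zero_le_one ?_ fun x hx => ?_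
  · rw [Measure.map_apply_of_aemeasurable hV.aemeasurable_restrict_Icc .univ, preimage_univ,
      Measure.restrict_apply_univ]
  · rw [Measure.map_apply_of_aemeasurable hV.aemeasurable_restrict_Icc measurableSet_Iic,
      Measure.restrict_apply' measurableSet_Icc, hV.volume_preimage_Iic_inter_Icc hx,
      Real.volume_Icc, sub_zero]

end IsVTransform

/-- a v-transform preserves the uniform distribution: if `U` is
uniformly distributed on `[0,1]` then so is `𝒱(U)`; equivalently `𝒱` is a
Lebesgue-measure-preserving transformation of `[0,1]`: for every Borel set
`B ⊆ [0,1]` the Lebesgue measure of `𝒱⁻¹(B)` equals that of `B`. -/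
theorem vtransform_measure_preserving (V : ℝ → ℝ) (δ : ℝ) (hV : IsVTransform V δ) :
    (∀ (Ω : Type) (_ : MeasurableSpace Ω) (μ : Measure Ω), IsProbabilityMeasure μ →
      ∀ U : Ω → ℝ, Measurable U →
        Measure.map U μ = volume.restrict (Set.Icc 0 1) →
        Measure.map (fun ω => V (U ω)) μ = volume.restrict (Set.Icc 0 1)) ∧
    (∀ B : Set ℝ, MeasurableSet B → B ⊆ Set.Icc 0 1 →
      volume (V ⁻¹' B ∩ Set.Icc 0 1) = volume B) := by
  have hmeas := hV.aemeasurable_restrict_Icc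
  refine ⟨fun Ω _ μ _ U hU hlaw => ?_, fun B hB hsub => ?_⟩
  · calc Measure.map (fun ω => V (U ω)) μ
        = Measure.map V (Measure.map U μ) :=
          (AEMeasurable.map_map_of_aemeasurable (hlaw ▸ hmeas) hU.aemeasurable).symm
      _ = volume.restrict (Icc 0 1) := by rw [hlaw, hV.map_volume_restrict_Icc]
  · calc volume (V ⁻¹' B ∩ Icc 0 1)
        = Measure.map V (volume.restrict (Icc 0 1)) B := by
          rw [Measure.map_apply_of_aemeasurable hmeas hB,
            Measure.restrict_apply' measurableSet_Icc]
      _ = volume B := by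
          rw [hV.map_volume_restrict_Icc, Measure.restrict_eq_self _ hsub]
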